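/- Suppose (P,Q,f,g,η) gives a Morita equivalence of triples between (A,B,ε) and (A',B',ε'), where in addition f : P⊗_{A'}Q → A and g : Q⊗_A P → A' satisfy q·f(p⊗q') = g(q⊗p)·q' and p·g(q⊗p') = f(p⊗q)·p' for all p,p' ∈ P and q,q' ∈ Q. Then there is a k-module isomorphism H₁((A,B,ε);M) ≅ H₁((A',B',ε');Q⊗_A M⊗_A P), where Q⊗_A M⊗_A P carries its natural A'-bimodule structure (which is B'-symmetric). -/

import Mathlib

/-!
STATEMENT 4: Suppose (P,Q,f,g,η) gives a Morita equivalence of triples between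
(A,B,ε) and (A',B',ε'), where in addition f : P⊗_{A'}Q → A and g : Q⊗_A P → A'
satisfy q·f(p⊗q') = g(q⊗p)·q' and p·g(q⊗p') = f(p⊗q)·p' for all p,p' ∈ P and
q,q' ∈ Q.  Then there is a k-module isomorphism
  H₁((A,B,ε);M) ≅ H₁((A',B',ε');Q⊗_A M⊗_A P),
where Q⊗_A M⊗_A P carries its natural A'-bimodule structure.

Balanced tensor products over the noncommutative rings A, A' are formalized as
quotients of tensor products over k by the span of the balancing relations.
H₁ = ker ∂₁ / im ∂₂ on each side; the differentials are quantified universally,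
characterized by their values on (the classes of) pure tensors, with the natural
A'-bimodule structure of Q⊗_A M⊗_A P (left action on the Q factor, right action on
the P factor) built into the characterization of ∂₁' and ∂₂'.
-/

open TensorProduct MulOpposite

set_option maxSynthPendingDepth 8

/-- The balancing relations defining `X ⊗[R] Y` inside `X ⊗[k] Y`, for a right
`R`-module `X` and a left `R`-module `Y`. -/
def moritaRel (k : Type*) [CommRing k] (R X Y : Type*) [Ring R]
    [AddCommGroup X] [AddCommGroup Y] [Module k X] [Module k Y]
    [Module Rᵐᵒᵖ X] [Module R Y] : Submodule k (X ⊗[k] Y) :=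
  Submodule.span k
    {z | ∃ (r : R) (x : X) (y : Y), z = (op r • x) ⊗ₜ[k] y - x ⊗ₜ[k] (r • y)}

/-- The balancing relations defining `X ⊗[R] M ⊗[R] Y` inside `X ⊗[k] M ⊗[k] Y`,
for a right `R`-module `X`, an `R`-bimodule `M` and a left `R`-module `Y`. -/
def tripleRel (k : Type*) [CommRing k] (R X M Y : Type*) [Ring R]
    [AddCommGroup X] [AddCommGroup M] [AddCommGroup Y]
    [Module k X] [Module k M] [Module k Y]
    [Module Rᵐᵒᵖ X] [Module R M] [Module Rᵐᵒᵖ M] [Module R Y] :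
    Submodule k (X ⊗[k] M ⊗[k] Y) :=
  Submodule.span k
    ({z | ∃ (r : R) (x : X) (m : M) (y : Y),
        z = (op r • x) ⊗ₜ[k] m ⊗ₜ[k] y - x ⊗ₜ[k] (r • m) ⊗ₜ[k] y} ∪
     {z | ∃ (r : R) (x : X) (m : M) (y : Y),
        z = x ⊗ₜ[k] (op r • m) ⊗ₜ[k] y - x ⊗ₜ[k] m ⊗ₜ[k] (r • y)})

/-!
`H₁((A,B,ε);M)` is the kernel of the map `∂ : (M ⊗ A) / im ∂₂ → M` induced by `∂₁`, and a class
`[m ⊗ a]` in the quotient behaves like a one-form `m da`: it obeys the Leibniz rule in `a`, and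
elements of `B` are constants. If `∑ f(pᵢ ⊗ qᵢ) = 1`, the generalized trace
`m ↦ ∑ qᵢ ⊗ m ⊗ pᵢ` extends to one-forms by `m da ↦ ∑ (qᵢ ⊗ m ⊗ pⱼ) dg(qⱼ ⊗ a pᵢ)`, compatibly with
`∂`. Exchanging the roles of `A` and `A'` gives a map back. The round trip conjugates by elements
with `∑ w_c x_c = 1`, that is, `m da ↦ ∑ (x_c m w_d) d(x_d a w_c)`; by the Leibniz rule this differs
from the identity by a map factoring through `∂`, so it is the identity on the kernel of `∂`.
-/

section KernelEquiv

variable {R X Y C D : Type*} [Ring R] [AddCommGroup X] [AddCommGroup Y] [AddCommGroup C]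
  [AddCommGroup D] [Module R X] [Module R Y] [Module R C] [Module R D]

/-- Isomorphism between the degree-one cycles of two complexes `X → C` and `Y → D`, given by chain
maps whose composites are homotopic to the identity. Cycles rather than homology: the homotopies
have no component above degree one. -/
def kerEquivOfHomotopy {d : X →ₗ[R] C} {d' : Y →ₗ[R] D} {φ : X →ₗ[R] Y} {ψ : Y →ₗ[R] X}
    {φ₀ : C →ₗ[R] D} {ψ₀ : D →ₗ[R] C} {h : C →ₗ[R] X} {h' : D →ₗ[R] Y}
    (hφ : d' ∘ₗ φ = φ₀ ∘ₗ d) (hψ : d ∘ₗ ψ = ψ₀ ∘ₗ d')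
    (hψφ : ψ ∘ₗ φ = LinearMap.id + h ∘ₗ d) (hφψ : φ ∘ₗ ψ = LinearMap.id + h' ∘ₗ d') :
    LinearMap.ker d ≃ₗ[R] LinearMap.ker d' :=
  LinearEquiv.ofLinearMap
    (φ.restrict fun x (hx : d x = 0) => by
      simpa [hx] using LinearMap.congr_fun hφ x)
    (ψ.restrict fun y (hy : d' y = 0) => by
      simpa [hy] using LinearMap.congr_fun hψ y)
    (LinearMap.ext fun ⟨y, (hy : d' y = 0)⟩ => Subtype.ext <|
      (LinearMap.congr_fun hφψ y).trans (by simp [hy]))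
    (LinearMap.ext fun ⟨x, (hx : d x = 0)⟩ => Subtype.ext <|
      (LinearMap.congr_fun hψφ x).trans (by simp [hx]))

/-- The homology `ker f / p` of `p ↪ X → C`, as the kernel of the map induced on `X ⧸ p`. -/
noncomputable def kerQuotientEquivKerLiftQ (f : X →ₗ[R] C) (p : Submodule R X)
    (h : p ≤ LinearMap.ker f) :
    (LinearMap.ker f ⧸ p.comap (LinearMap.ker f).subtype) ≃ₗ[R] LinearMap.ker (p.liftQ f h) :=
  (Submodule.quotEquivOfEq _ _ (by ext x; simp [Subtype.ext_iff])).trans <|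
    ((p.mkQ.submoduleMap (LinearMap.ker f)).quotKerEquivOfSurjective
      (p.mkQ.submoduleMap_surjective _)).trans <|
    LinearEquiv.ofEq _ _ (Submodule.ker_liftQ p f h).symm

end KernelEquiv

namespace SecondaryHochschild

section Complex

variable {k A B : Type*} [CommRing k] [Ring A] [Algebra k A] [CommRing B] [Algebra k B]
  (ε : B →ₐ[k] A) (M : Type*) [AddCommGroup M] [Module k M] [Module A M] [Module Aᵐᵒᵖ M]
  [IsScalarTower k A M] [IsScalarTower k Aᵐᵒᵖ M]

variable (k A) in
/-- The differential `∂₁ : M ⊗ A → M`. -/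
noncomputable def d₁ : M ⊗[k] A →ₗ[k] M :=
  TensorProduct.lift
    (((Algebra.lsmul k k M).toLinearMap ∘ₗ (opLinearEquiv k).toLinearMap).flip -
      (Algebra.lsmul k k M).toLinearMap.flip)

@[simp]
lemma d₁_tmul (m : M) (a : A) : d₁ k A M (m ⊗ₜ a) = op a • m - a • m := by
  simp [d₁]

/-- The differential `∂₂ : M ⊗ A ⊗ A ⊗ B → M ⊗ A`, assembled from the endomorphisms
`∂₂(- ⊗ b ⊗ α)` of `M ⊗ A`. -/
noncomputable def d₂ : M ⊗[k] A ⊗[k] A ⊗[k] B →ₗ[k] M ⊗[k] A :=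
  TensorProduct.lift (TensorProduct.lift
    (LinearMap.mk₂ k
      (fun (b : A) (α : B) =>
        (TensorProduct.mk k M A).flip b ∘ₗ
            TensorProduct.lift ((Algebra.lsmul k k M).toLinearMap ∘ₗ
              (opLinearEquiv k).toLinearMap ∘ₗ LinearMap.mulRight k (ε α)).flip -
          (LinearMap.mulRight k b ∘ₗ LinearMap.mulRight k (ε α)).lTensor M +
          (Algebra.lsmul k k M (b * ε α)).rTensor A)
      (fun b b' α => by ext m a; simp [tmul_add, mul_add, add_mul]; abel)
      (fun c b α => by ext m a; simp [smul_tmul', smul_sub, smul_add])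
      (fun b α α' => by ext m a; simp [tmul_add, mul_add, add_mul]; abel)
      (fun c b α => by ext m a; simp [smul_tmul', smul_sub, smul_add]))).flip ∘ₗ
    (TensorProduct.assoc k (M ⊗[k] A) A B).toLinearMap

@[simp]
lemma d₂_tmul (m : M) (a b : A) (α : B) :
    d₂ ε M (m ⊗ₜ a ⊗ₜ b ⊗ₜ α) =
      (op (a * ε α) • m) ⊗ₜ b - m ⊗ₜ (a * ε α * b) + ((b * ε α) • m) ⊗ₜ a := by
  simp [d₂, mul_smul]

variable {M} in
lemma d₁_comp_d₂ [SMulCommClass A Aᵐᵒᵖ M] (hcen : ∀ (b : B) (a : A), ε b * a = a * ε b)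
    (hsymm : ∀ (b : B) (m : M), ε b • m = op (ε b) • m) : d₁ k A M ∘ₗ d₂ ε M = 0 := by
  have : SMulCommClass Aᵐᵒᵖ A M := .symm _ _ _
  ext m a b α
  suffices h : d₁ k A M (d₂ ε M (m ⊗ₜ a ⊗ₜ b ⊗ₜ α)) = 0 by simpa using h
  have h_outer : op a • (b * ε α) • m = b • op (a * ε α) • m := by
    rw [mul_smul, hsymm, smul_comm (op a), smul_smul, ← op_mul, ← hcen]
  have h_left : (a * ε α * b) • m = a • (b * ε α) • m := by
    rw [mul_assoc, hcen, mul_smul]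
  have h_right : op (a * ε α * b) • m = op b • op (a * ε α) • m := by rw [op_mul, mul_smul]
  rw [d₂_tmul, map_add, map_sub, d₁_tmul, d₁_tmul, d₁_tmul, h_outer, h_left, h_right]
  abel

/-- The secondary Hochschild homology `H₁((A,B,ε);M) = ker ∂₁ / im ∂₂`, with `im ∂₂` intersected
with `ker ∂₁` so that no hypothesis `∂₁ ∘ ∂₂ = 0` is needed to form it. -/
abbrev H₁ : Type _ :=
  LinearMap.ker (d₁ k A M) ⧸ (LinearMap.range (d₂ ε M)).comap (LinearMap.ker (d₁ k A M)).subtype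

/-- The noncommutative one-forms `m da` of `A` relative to `B` with coefficients in `M`, as the
quotient of `M ⊗ A` by the boundaries. -/
abbrev OneForms : Type _ := (M ⊗[k] A) ⧸ LinearMap.range (d₂ ε M)

end Complex

namespace OneForms

variable {k A B : Type*} [CommRing k] [Ring A] [Algebra k A] [CommRing B] [Algebra k B]
  {ε : B →ₐ[k] A} {M : Type*} [AddCommGroup M] [Module k M] [Module A M] [Module Aᵐᵒᵖ M]
  [IsScalarTower k A M] [IsScalarTower k Aᵐᵒᵖ M]

variable (ε M) in
/-- The one-form `m da`, that is, the class of `m ⊗ a`. -/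
noncomputable def form : M →ₗ[k] A →ₗ[k] OneForms ε M :=
  (TensorProduct.mk k M A).compr₂ (LinearMap.range (d₂ ε M)).mkQ

lemma form_mul_map_mul (m : M) (a b : A) (α : B) :
    form ε M m (a * ε α * b) = form ε M (op (a * ε α) • m) b + form ε M ((b * ε α) • m) a := by
  have h : form ε M (op (a * ε α) • m) b - form ε M m (a * ε α * b)
      + form ε M ((b * ε α) • m) a = 0 :=
    (Submodule.Quotient.mk_eq_zero _).2 ⟨m ⊗ₜ a ⊗ₜ b ⊗ₜ α, d₂_tmul ε M m a b α⟩
  rw [← sub_eq_zero, ← neg_eq_zero, ← h]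
  abel

lemma form_mul (m : M) (a b : A) :
    form ε M m (a * b) = form ε M (op a • m) b + form ε M (b • m) a := by
  simpa using form_mul_map_mul m a b (1 : B)

@[simp]
lemma form_one (m : M) : form ε M m 1 = 0 := by
  simpa using form_mul (ε := ε) m 1 1

lemma form_mul_map (m : M) (a : A) (α : B) :
    form ε M m (a * ε α) = form ε M (ε α • m) a := by
  simpa using form_mul_map_mul (ε := ε) m a 1 α

@[ext]
lemma hom_ext {X : Type*} [AddCommGroup X] [Module k X] {f g : OneForms ε M →ₗ[k] X}
    (h : ∀ m a, f (form ε M m a) = g (form ε M m a)) : f = g :=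
  Submodule.linearMap_qext _ (TensorProduct.ext' h)

/-- Universal property of one-forms: derivations `(m, a) ↦ D m a` that vanish on `B` factor through
them. -/
noncomputable def lift {X : Type*} [AddCommGroup X] [Module k X]
    (hcen : ∀ (b : B) (a : A), ε b * a = a * ε b) (D : M →ₗ[k] A →ₗ[k] X)
    (leibniz : ∀ m a b, D m (a * b) = D (op a • m) b + D (b • m) a)
    (map_B : ∀ m a α, D m (a * ε α) = D (ε α • m) a) : OneForms ε M →ₗ[k] X :=
  (LinearMap.range (d₂ ε M)).liftQ (TensorProduct.lift D) <|
    LinearMap.range_le_ker_iff.2 <| by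
      ext m a b α
      suffices h : TensorProduct.lift D (d₂ ε M (m ⊗ₜ a ⊗ₜ b ⊗ₜ α)) = 0 by simpa using h
      rw [d₂_tmul, map_add, map_sub, TensorProduct.lift.tmul, TensorProduct.lift.tmul,
        TensorProduct.lift.tmul, leibniz, map_B, smul_smul, hcen]
      abel

@[simp]
lemma lift_form {X : Type*} [AddCommGroup X] [Module k X]
    (hcen : ∀ (b : B) (a : A), ε b * a = a * ε b) (D : M →ₗ[k] A →ₗ[k] X)
    (leibniz : ∀ m a b, D m (a * b) = D (op a • m) b + D (b • m) a)
    (map_B : ∀ m a α, D m (a * ε α) = D (ε α • m) a) (m : M) (a : A) :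
    lift hcen D leibniz map_B (form ε M m a) = D m a :=
  rfl

/-- The map `m da ↦ m a - a m` induced by `∂₁`. -/
noncomputable def boundary (hd : d₁ k A M ∘ₗ d₂ ε M = 0) : OneForms ε M →ₗ[k] M :=
  (LinearMap.range (d₂ ε M)).liftQ (d₁ k A M) (LinearMap.range_le_ker_iff.2 hd)

@[simp]
lemma boundary_form (hd : d₁ k A M ∘ₗ d₂ ε M = 0) (m : M) (a : A) :
    boundary hd (form ε M m a) = op a • m - a • m :=
  d₁_tmul M m a

/-- The homology `H₁` as the closed one-forms. -/
noncomputable def h₁EquivKerBoundary (hd : d₁ k A M ∘ₗ d₂ ε M = 0) :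
    H₁ ε M ≃ₗ[k] LinearMap.ker (boundary hd) :=
  kerQuotientEquivKerLiftQ (d₁ k A M) _ _

section Homotopy

variable {ι : Type*} (S : Finset ι) (x w : ι → A)

lemma sum_form_op_smul (hxw : ∑ c ∈ S, w c * x c = 1) (m : M) :
    ∑ c ∈ S, form ε M (op (w c) • m) (x c) = -∑ c ∈ S, form ε M (x c • m) (w c) := by
  rw [eq_neg_iff_add_eq_zero, ← Finset.sum_add_distrib, ← form_one (ε := ε) m, ← hxw, map_sum]
  exact Finset.sum_congr rfl fun c _ => (form_mul m (w c) (x c)).symm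

variable (ε M) in
/-- The homotopy `m ↦ ∑ (x_c m) dw_c` between the identity and conjugation by `x` and `w`. -/
noncomputable def homotopy : M →ₗ[k] OneForms ε M :=
  ∑ c ∈ S, (form ε M).flip (w c) ∘ₗ Algebra.lsmul k k M (x c)

lemma homotopy_apply (m : M) : homotopy ε M S x w m = ∑ c ∈ S, form ε M (x c • m) (w c) := by
  simp [homotopy]

theorem sum_form_conj [SMulCommClass A Aᵐᵒᵖ M] (hxw : ∑ c ∈ S, w c * x c = 1) (m : M) (a : A) :
    ∑ c ∈ S, ∑ d ∈ S, form ε M (x c • op (w d) • m) (x d * a * w c) =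
      form ε M m a + homotopy ε M S x w (op a • m - a • m) := by
  have expand : ∀ c d, form ε M (x c • op (w d) • m) (x d * a * w c) =
      form ε M (x c • op a • op (w d * x d) • m) (w c) +
        form ε M ((w c * x c) • op (w d * x d) • m) a +
        form ε M (a • (w c * x c) • op (w d) • m) (x d) := fun c d => by
    rw [form_mul, form_mul, add_assoc]
    simp only [op_mul, mul_smul, smul_comm (_ : A) (op _ : Aᵐᵒᵖ)]
  have sum_op : ∀ m : M, ∑ c ∈ S, op (w c * x c) • m = m := fun m => by
    rw [← Finset.sum_smul, ← Finset.op_sum, hxw, op_one, one_smul]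
  have sum_smul : ∀ m : M, ∑ c ∈ S, (w c * x c) • m = m := fun m => by
    rw [← Finset.sum_smul, hxw, one_smul]
  calc
    _ = ∑ c ∈ S, form ε M (x c • op a • m) (w c) + form ε M m a +
        ∑ d ∈ S, form ε M (op (w d) • a • m) (x d) := by
      simp only [expand, Finset.sum_add_distrib]
      rw [Finset.sum_comm (f := fun c d => form ε M (a • (w c * x c) • op (w d) • m) (x d))]
      simp only [← LinearMap.sum_apply, ← map_sum, ← Finset.smul_sum, sum_op, sum_smul, smul_comm a]
    _ = _ := by
      rw [sum_form_op_smul S x w hxw, map_sub, homotopy_apply, homotopy_apply]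
      abel

end Homotopy

end OneForms

end SecondaryHochschild

section MoritaContext

variable (k A A' P Q : Type*) [CommRing k] [Ring A] [Algebra k A] [Ring A'] [Algebra k A']
  [AddCommGroup P] [Module k P] [Module A P] [Module A'ᵐᵒᵖ P]
  [AddCommGroup Q] [Module k Q] [Module A' Q] [Module Aᵐᵒᵖ Q]

/-- A Morita context between `A` and `A'`: bimodules `P`, `Q` with balanced bimodule pairings
`f : P × Q → A` and `g : Q × P → A'` that are associative with each other. The pairings are
bilinear maps over `k`, so that their values on pure tensors suffice. -/
structure MoritaContext where
  f : P →ₗ[k] Q →ₗ[k] A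
  g : Q →ₗ[k] P →ₗ[k] A'
  f_smul : ∀ a p q, f (a • p) q = a * f p q
  f_op_smul : ∀ a p q, f p (op a • q) = f p q * a
  f_balanced : ∀ (a' : A') p q, f (op a' • p) q = f p (a' • q)
  g_smul : ∀ a' q p, g (a' • q) p = a' * g q p
  g_op_smul : ∀ a' q p, g q (op a' • p) = g q p * a'
  g_balanced : ∀ (a : A) q p, g (op a • q) p = g q (a • p)
  op_f_smul : ∀ p q q', op (f p q') • q = g q p • q'
  op_g_smul : ∀ p p' q, op (g q p') • p = f p q • p'

end MoritaContext

namespace MoritaContext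

variable {k A A' P Q : Type*} [CommRing k] [Ring A] [Algebra k A] [Ring A'] [Algebra k A']
  [AddCommGroup P] [Module k P] [Module A P] [Module A'ᵐᵒᵖ P]
  [AddCommGroup Q] [Module k Q] [Module A' Q] [Module Aᵐᵒᵖ Q]

/-- The Morita context with the roles of `A` and `A'` exchanged. -/
def symm (c : MoritaContext k A A' P Q) : MoritaContext k A' A Q P where
  f := c.g
  g := c.f
  f_smul := c.g_smul
  f_op_smul := c.g_op_smul
  f_balanced := c.g_balanced
  g_smul := c.f_smul
  g_op_smul := c.f_op_smul
  g_balanced := c.f_balanced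
  op_f_smul q p p' := c.op_g_smul p p' q
  op_g_smul q q' p := c.op_f_smul p q q'

@[simp]
lemma symm_g (c : MoritaContext k A A' P Q) : c.symm.g = c.f := rfl

/-- An `A`-bimodule `M` and an `A'`-bimodule `N` that correspond under a Morita context. The maps
`push` and `pull` stand for `Q ⊗ M ⊗ P → N` and `P ⊗ N ⊗ Q → M`; this form is symmetric in `M` and
`N`, whereas `N = Q ⊗ M ⊗ P` is not. -/
structure Coefficients (c : MoritaContext k A A' P Q) (M N : Type*)
    [AddCommGroup M] [Module k M] [Module A M] [Module Aᵐᵒᵖ M]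
    [AddCommGroup N] [Module k N] [Module A' N] [Module A'ᵐᵒᵖ N] where
  push : Q →ₗ[k] M →ₗ[k] P →ₗ[k] N
  pull : P →ₗ[k] N →ₗ[k] Q →ₗ[k] M
  smul_push : ∀ (a' : A') q m p, a' • push q m p = push (a' • q) m p
  op_smul_push : ∀ (a' : A') q m p, op a' • push q m p = push q m (op a' • p)
  push_op_smul : ∀ (a : A) q m p, push (op a • q) m p = push q (a • m) p
  push_smul : ∀ (a : A) q m p, push q m (a • p) = push q (op a • m) p
  smul_pull : ∀ (a : A) p n q, a • pull p n q = pull (a • p) n q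
  op_smul_pull : ∀ (a : A) p n q, op a • pull p n q = pull p n (op a • q)
  pull_op_smul : ∀ (a' : A') p n q, pull (op a' • p) n q = pull p (a' • n) q
  pull_smul : ∀ (a' : A') p n q, pull p n (a' • q) = pull p (op a' • n) q
  pull_push : ∀ p q m p' q', pull p (push q m p') q' = c.f p q • op (c.f p' q') • m
  push_pull : ∀ q p n q' p', push q (pull p n q') p' = c.g q p • op (c.g q' p') • n

variable {M N : Type*} [AddCommGroup M] [Module k M] [Module A M] [Module Aᵐᵒᵖ M]
    [AddCommGroup N] [Module k N] [Module A' N] [Module A'ᵐᵒᵖ N]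
    {c : MoritaContext k A A' P Q}

/-- The corresponding bimodules with the roles of `M` and `N` exchanged. -/
def Coefficients.symm (v : c.Coefficients M N) : c.symm.Coefficients N M where
  push := v.pull
  pull := v.push
  smul_push := v.smul_pull
  op_smul_push := v.op_smul_pull
  push_op_smul := v.pull_op_smul
  push_smul := v.pull_smul
  smul_pull := v.smul_push
  op_smul_pull := v.op_smul_push
  pull_op_smul := v.push_op_smul
  pull_smul := v.push_smul
  pull_push := v.push_pull
  push_pull := v.pull_push

@[simp]
lemma Coefficients.symm_push (v : c.Coefficients M N) : v.symm.push = v.pull := rfl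

section DualBasis

variable (c) {S : Finset (P × Q)}

lemma sum_op_g_smul (hS : ∑ i ∈ S, c.f i.1 i.2 = 1) (p : P) :
    ∑ i ∈ S, op (c.g i.2 p) • i.1 = p := by
  simp only [c.op_g_smul, ← Finset.sum_smul, hS, one_smul]

lemma sum_g_smul_smul (hS : ∑ i ∈ S, c.f i.1 i.2 = 1) (a : A) (q : Q) :
    ∑ i ∈ S, c.g q (a • i.1) • i.2 = op a • q := by
  simp only [← c.op_f_smul, c.f_smul, ← Finset.sum_smul, ← Finset.op_sum, ← Finset.mul_sum, hS,
    mul_one]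

lemma sum_g_mul_g (hS : ∑ i ∈ S, c.f i.1 i.2 = 1) (q : Q) (p : P) :
    ∑ i ∈ S, c.g q i.1 * c.g i.2 p = c.g q p := by
  simp only [← c.g_op_smul, ← map_sum, c.sum_op_g_smul hS]

end DualBasis

open SecondaryHochschild OneForms

namespace Coefficients

variable {B B' : Type*} [CommRing B] [Algebra k B] [CommRing B'] [Algebra k B']
  {ε : B →ₐ[k] A} {ε' : B' →ₐ[k] A'} {η : B → B'}

section Trace

variable (v : c.Coefficients M N) (S : Finset (P × Q))

/-- The generalized trace `m ↦ ∑ qᵢ ⊗ m ⊗ pᵢ` over a finite family of pairs `(pᵢ, qᵢ)`. -/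
noncomputable def trace : M →ₗ[k] N :=
  ∑ i ∈ S, (v.push i.2).flip i.1

lemma trace_apply (m : M) : v.trace S m = ∑ i ∈ S, v.push i.2 m i.1 := by
  simp [trace]

variable (ε') [IsScalarTower k A' N] [IsScalarTower k A'ᵐᵒᵖ N] [IsScalarTower k A P]

/-- The generalized trace on one-forms, `m da ↦ ∑ (qᵢ ⊗ m ⊗ pⱼ) dg(qⱼ ⊗ a pᵢ)`. -/
noncomputable def traceForm : M →ₗ[k] A →ₗ[k] OneForms ε' N :=
  ∑ i ∈ S, ∑ j ∈ S, (form ε' N).compl₁₂ ((v.push i.2).flip j.1)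
    (c.g j.2 ∘ₗ (LinearMap.toSpanSingleton A P i.1).restrictScalars k)

lemma traceForm_apply (m : M) (a : A) :
    v.traceForm ε' S m a =
      ∑ i ∈ S, ∑ j ∈ S, form ε' N (v.push i.2 m j.1) (c.g j.2 (a • i.1)) := by
  simp [traceForm]

variable {ε' S}

lemma traceForm_mul (hS : ∑ i ∈ S, c.f i.1 i.2 = 1) (m : M) (a b : A) :
    v.traceForm ε' S m (a * b) =
      v.traceForm ε' S (op a • m) b + v.traceForm ε' S (b • m) a := by
  have expand : ∀ i j : P × Q, form ε' N (v.push i.2 m j.1) (c.g j.2 ((a * b) • i.1)) =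
      ∑ l ∈ S, (form ε' N (v.push i.2 m (op (c.g j.2 (a • l.1)) • j.1)) (c.g l.2 (b • i.1)) +
        form ε' N (v.push (c.g l.2 (b • i.1) • i.2) m j.1) (c.g j.2 (a • l.1))) := fun i j => by
    simp only [← v.op_smul_push, ← v.smul_push, ← form_mul, ← map_sum]
    simp only [← c.g_balanced a, c.sum_g_mul_g hS]
    rw [c.g_balanced, mul_smul]
  have sum_right : ∀ p, ∑ j ∈ S, op (c.g j.2 p) • j.1 = p := c.sum_op_g_smul hS
  have sum_left : ∀ q, ∑ i ∈ S, c.g q (b • i.1) • i.2 = op b • q := c.sum_g_smul_smul hS b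
  simp only [traceForm_apply, expand, Finset.sum_add_distrib]
  congr 1
  · refine Finset.sum_congr rfl fun i _ => ?_
    rw [Finset.sum_comm]
    simp only [← LinearMap.sum_apply, ← map_sum, sum_right, v.push_smul]
  · rw [Finset.sum_comm_cycle]
    refine Finset.sum_congr rfl fun l _ => ?_
    rw [Finset.sum_comm]
    simp only [← LinearMap.sum_apply, ← map_sum, sum_left, v.push_op_smul]

variable [SMulCommClass A A'ᵐᵒᵖ P]

lemma traceForm_mul_map
    (hP : ∀ (α : B) (p : P), ε α • p = op (ε' (η α)) • p)
    (hQ : ∀ (α : B) (q : Q), op (ε α) • q = ε' (η α) • q) (m : M) (a : A) (α : B) :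
    v.traceForm ε' S m (a * ε α) = v.traceForm ε' S (ε α • m) a := by
  simp only [traceForm_apply, mul_smul, hP, smul_comm a, c.g_op_smul, form_mul_map, v.smul_push,
    ← hQ, v.push_op_smul]

variable [IsScalarTower k A M] [IsScalarTower k Aᵐᵒᵖ M]

variable (hcen : ∀ (b : B) (a : A), ε b * a = a * ε b)
  (hS : ∑ i ∈ S, c.f i.1 i.2 = 1) (hP : ∀ (α : B) (p : P), ε α • p = op (ε' (η α)) • p)
  (hQ : ∀ (α : B) (q : Q), op (ε α) • q = ε' (η α) • q)

/-- The map of one-forms induced by `traceForm`. -/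
noncomputable def transfer : OneForms ε M →ₗ[k] OneForms ε' N :=
  lift hcen (v.traceForm ε' S) (v.traceForm_mul hS) (v.traceForm_mul_map hP hQ)

@[simp]
lemma transfer_form (m : M) (a : A) :
    v.transfer hcen hS hP hQ (form ε M m a) = v.traceForm ε' S m a :=
  lift_form hcen _ _ _ m a

lemma boundary_comp_transfer (hd : d₁ k A M ∘ₗ d₂ ε M = 0) (hd' : d₁ k A' N ∘ₗ d₂ ε' N = 0) :
    boundary hd' ∘ₗ v.transfer hcen hS hP hQ = v.trace S ∘ₗ boundary hd := by
  refine OneForms.hom_ext fun m a => ?_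
  have sum_right : ∀ i : P × Q, ∑ j ∈ S, op (c.g j.2 (a • i.1)) • j.1 = a • i.1 := fun i =>
    c.sum_op_g_smul hS _
  have sum_left : ∀ j : P × Q, ∑ i ∈ S, c.g j.2 (a • i.1) • i.2 = op a • j.2 := fun j =>
    c.sum_g_smul_smul hS a j.2
  calc boundary hd' (v.transfer hcen hS hP hQ (form ε M m a))
      = ∑ i ∈ S, ∑ j ∈ S, v.push i.2 m (op (c.g j.2 (a • i.1)) • j.1) -
          ∑ j ∈ S, ∑ i ∈ S, v.push (c.g j.2 (a • i.1) • i.2) m j.1 := by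
        rw [Finset.sum_comm (f := fun (j i : P × Q) => v.push (c.g j.2 (a • i.1) • i.2) m j.1)]
        simp only [transfer_form, traceForm_apply, map_sum, boundary_form, v.op_smul_push,
          v.smul_push, Finset.sum_sub_distrib]
    _ = ∑ i ∈ S, v.push i.2 (op a • m) i.1 - ∑ j ∈ S, v.push j.2 (a • m) j.1 := by
        simp only [← LinearMap.sum_apply, ← map_sum, sum_right, sum_left, v.push_smul,
          v.push_op_smul]
    _ = v.trace S (boundary hd (form ε M m a)) := by
        rw [boundary_form, map_sub, trace_apply, trace_apply]

end Trace

section Equiv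

variable [IsScalarTower k A M] [IsScalarTower k Aᵐᵒᵖ M] [SMulCommClass A Aᵐᵒᵖ M]
  [IsScalarTower k A' N] [IsScalarTower k A'ᵐᵒᵖ N]
  [IsScalarTower k A P] [SMulCommClass A A'ᵐᵒᵖ P] [IsScalarTower k A' Q] [SMulCommClass A' Aᵐᵒᵖ Q]
  {θ : B' → B} {S : Finset (P × Q)} {T : Finset (Q × P)}

theorem transfer_symm_comp_transfer (v : c.Coefficients M N)
    (hcen : ∀ (b : B) (a : A), ε b * a = a * ε b)
    (hcen' : ∀ (b : B') (a : A'), ε' b * a = a * ε' b)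
    (hS : ∑ i ∈ S, c.f i.1 i.2 = 1) (hT : ∑ t ∈ T, c.symm.f t.1 t.2 = 1)
    (hP : ∀ (α : B) (p : P), ε α • p = op (ε' (η α)) • p)
    (hQ : ∀ (α : B) (q : Q), op (ε α) • q = ε' (η α) • q)
    (hP' : ∀ (α : B') (p : P), op (ε' α) • p = ε (θ α) • p)
    (hQ' : ∀ (α : B') (q : Q), ε' α • q = op (ε (θ α)) • q)
    (hd : d₁ k A M ∘ₗ d₂ ε M = 0) :
    v.symm.transfer hcen' hT hQ' hP' ∘ₗ v.transfer hcen hS hP hQ =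
      LinearMap.id + homotopy ε M (S ×ˢ T) (fun c' => c.f c'.2.2 c'.1.2)
        (fun c' => c.f c'.1.1 c'.2.1) ∘ₗ boundary hd := by
  have conj : ∀ (i j : P × Q) (t u : Q × P) (a : A),
      c.f u.2 (c.g j.2 (a • i.1) • t.1) = c.f u.2 j.2 * a * c.f i.1 t.1 := fun i j t u a => by
    rw [← c.op_f_smul, c.f_op_smul, c.f_smul, mul_assoc]
  have hST : ∑ c' ∈ S ×ˢ T, c.f c'.1.1 c'.2.1 * c.f c'.2.2 c'.1.2 = 1 := by
    rw [Finset.sum_product, ← hS]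
    exact Finset.sum_congr rfl fun i _ => c.symm.sum_g_mul_g hT i.1 i.2
  refine OneForms.hom_ext fun m a => ?_
  rw [LinearMap.add_apply, LinearMap.id_apply, LinearMap.comp_apply, LinearMap.comp_apply,
    boundary_form, ← sum_form_conj _ _ _ hST, transfer_form, traceForm_apply]
  simp only [map_sum, transfer_form, traceForm_apply, symm_push, symm_g, v.pull_push, conj,
    Finset.sum_product]
  refine Finset.sum_congr rfl fun i _ => ?_
  rw [Finset.sum_comm]

/-- Morita invariance of `H₁` for corresponding bimodules. The maps `η : B → B'` and `θ : B' → B`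
need only match the actions of `B` and `B'` on `P` and `Q`. -/
noncomputable def h₁Equiv (v : c.Coefficients M N) [SMulCommClass A' A'ᵐᵒᵖ N]
    (hcen : ∀ (b : B) (a : A), ε b * a = a * ε b)
    (hcen' : ∀ (b : B') (a : A'), ε' b * a = a * ε' b)
    (hS : ∑ i ∈ S, c.f i.1 i.2 = 1) (hT : ∑ t ∈ T, c.symm.f t.1 t.2 = 1)
    (hP : ∀ (α : B) (p : P), ε α • p = op (ε' (η α)) • p)
    (hQ : ∀ (α : B) (q : Q), op (ε α) • q = ε' (η α) • q)
    (hP' : ∀ (α : B') (p : P), op (ε' α) • p = ε (θ α) • p)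
    (hQ' : ∀ (α : B') (q : Q), ε' α • q = op (ε (θ α)) • q)
    (hd : d₁ k A M ∘ₗ d₂ ε M = 0) (hd' : d₁ k A' N ∘ₗ d₂ ε' N = 0) :
    H₁ ε M ≃ₗ[k] H₁ ε' N :=
  h₁EquivKerBoundary hd ≪≫ₗ
    kerEquivOfHomotopy (v.boundary_comp_transfer hcen hS hP hQ hd hd')
      (v.symm.boundary_comp_transfer hcen' hT hQ' hP' hd' hd)
      (v.transfer_symm_comp_transfer hcen hcen' hS hT hP hQ hP' hQ' hd)
      (v.symm.transfer_symm_comp_transfer hcen' hcen hT hS hQ' hP' hQ hP hd') ≪≫ₗ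
    (h₁EquivKerBoundary hd').symm

end Equiv

end Coefficients

end MoritaContext

section TripleTensor

variable (k A Q M P : Type*) [CommRing k] [Ring A]
  [AddCommGroup Q] [Module k Q] [Module Aᵐᵒᵖ Q]
  [AddCommGroup M] [Module k M] [Module A M] [Module Aᵐᵒᵖ M]
  [AddCommGroup P] [Module k P] [Module A P]

/-- The tensor product `Q ⊗[A] M ⊗[A] P` over the noncommutative ring `A`. -/
abbrev TripleTensor : Type _ := (Q ⊗[k] M ⊗[k] P) ⧸ tripleRel k A Q M P

end TripleTensor

namespace TripleTensor

variable {k A Q M P : Type*} [CommRing k] [Ring A]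
  [AddCommGroup Q] [Module k Q] [Module Aᵐᵒᵖ Q]
  [AddCommGroup M] [Module k M] [Module A M] [Module Aᵐᵒᵖ M]
  [AddCommGroup P] [Module k P] [Module A P]

variable (k A Q M P) in
/-- The class of the pure tensor `q ⊗ m ⊗ p`. -/
noncomputable def mk : Q →ₗ[k] M →ₗ[k] P →ₗ[k] TripleTensor k A Q M P :=
  TensorProduct.curry (TensorProduct.curry (tripleRel k A Q M P).mkQ)

lemma mk_op_smul (a : A) (q : Q) (m : M) (p : P) :
    mk k A Q M P (op a • q) m p = mk k A Q M P q (a • m) p :=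
  (Submodule.Quotient.eq _).2 (Submodule.subset_span (.inl ⟨a, q, m, p, rfl⟩))

lemma mk_smul (a : A) (q : Q) (m : M) (p : P) :
    mk k A Q M P q m (a • p) = mk k A Q M P q (op a • m) p :=
  ((Submodule.Quotient.eq _).2 (Submodule.subset_span (.inr ⟨a, q, m, p, rfl⟩))).symm

@[ext]
lemma hom_ext {X : Type*} [AddCommGroup X] [Module k X] {F G : TripleTensor k A Q M P →ₗ[k] X}
    (h : ∀ q m p, F (mk k A Q M P q m p) = G (mk k A Q M P q m p)) : F = G :=
  Submodule.linearMap_qext _ (TensorProduct.ext_threefold h)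

/-- Universal property of `Q ⊗[A] M ⊗[A] P` with respect to `A`-balanced trilinear maps. -/
noncomputable def lift {X : Type*} [AddCommGroup X] [Module k X] (F : Q →ₗ[k] M →ₗ[k] P →ₗ[k] X)
    (hQ : ∀ (a : A) q m p, F (op a • q) m p = F q (a • m) p)
    (hP : ∀ (a : A) q m p, F q m (a • p) = F q (op a • m) p) :
    TripleTensor k A Q M P →ₗ[k] X :=
  (tripleRel k A Q M P).liftQ (TensorProduct.lift (TensorProduct.lift F)) <|
    Submodule.span_le.2 <| by
      rintro _ (⟨a, q, m, p, rfl⟩ | ⟨a, q, m, p, rfl⟩)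
      · simp [hQ]
      · simp [hP]

@[simp]
lemma lift_mk {X : Type*} [AddCommGroup X] [Module k X] (F : Q →ₗ[k] M →ₗ[k] P →ₗ[k] X)
    (hQ : ∀ (a : A) q m p, F (op a • q) m p = F q (a • m) p)
    (hP : ∀ (a : A) q m p, F q m (a • p) = F q (op a • m) p) (q : Q) (m : M) (p : P) :
    lift F hQ hP (mk k A Q M P q m p) = F q m p :=
  rfl

section Bimodule

variable {A' : Type*} [Ring A'] [Algebra k A']

section Left

variable [Module A' Q] [IsScalarTower k A' Q] [SMulCommClass A' Aᵐᵒᵖ Q]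

variable (k A Q M P) in
/-- Left multiplication by `a'` on the factor `Q`. -/
noncomputable def leftMul (a' : A') : Module.End k (TripleTensor k A Q M P) :=
  lift (mk k A Q M P ∘ₗ Algebra.lsmul k k Q a')
    (fun a q m p => by simp [smul_comm a', mk_op_smul]) (fun a q m p => by simp [mk_smul])

@[simp]
lemma leftMul_mk (a' : A') (q : Q) (m : M) (p : P) :
    leftMul k A Q M P a' (mk k A Q M P q m p) = mk k A Q M P (a' • q) m p :=
  lift_mk _ _ _ q m p

variable (k A Q M P) in
/-- The left `A'`-action on `Q ⊗[A] M ⊗[A] P` as an algebra homomorphism. -/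
noncomputable def leftAction : A' →ₐ[k] Module.End k (TripleTensor k A Q M P) :=
  AlgHom.ofLinearMap
    { toFun := leftMul k A Q M P
      map_add' a' b' := hom_ext fun q m p => by simp [add_smul]
      map_smul' c a' := hom_ext fun q m p => by simp }
    (hom_ext fun q m p => by simp) (fun a' b' => hom_ext fun q m p => by simp [mul_smul])

-- Low priority: for `A' = k` the `k`-module structure must be the one of the quotient.
noncomputable instance (priority := low) : Module A' (TripleTensor k A Q M P) :=
  Module.compHom _ (leftAction k A Q M P).toRingHom

instance : IsScalarTower k A' (TripleTensor k A Q M P) :=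
  ⟨fun c a' n => LinearMap.congr_fun (map_smul (leftAction k A Q M P) c a') n⟩

lemma smul_mk (a' : A') (q : Q) (m : M) (p : P) :
    a' • mk k A Q M P q m p = mk k A Q M P (a' • q) m p :=
  leftMul_mk a' q m p

end Left

section Right

variable [Module A'ᵐᵒᵖ P] [IsScalarTower k A'ᵐᵒᵖ P] [SMulCommClass A A'ᵐᵒᵖ P]

variable (k A Q M P) in
/-- Right multiplication by `a'` on the factor `P`. -/
noncomputable def rightMul (a' : A'ᵐᵒᵖ) : Module.End k (TripleTensor k A Q M P) :=
  lift ((mk k A Q M P).compr₂ (LinearMap.lcomp k _ (Algebra.lsmul k k P a')))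
    (fun a q m p => by simp [mk_op_smul]) (fun a q m p => by simp [← smul_comm a, mk_smul])

@[simp]
lemma rightMul_mk (a' : A'ᵐᵒᵖ) (q : Q) (m : M) (p : P) :
    rightMul k A Q M P a' (mk k A Q M P q m p) = mk k A Q M P q m (a' • p) :=
  lift_mk _ _ _ q m p

variable (k A Q M P) in
/-- The right `A'`-action on `Q ⊗[A] M ⊗[A] P` as an algebra homomorphism. -/
noncomputable def rightAction : A'ᵐᵒᵖ →ₐ[k] Module.End k (TripleTensor k A Q M P) :=
  AlgHom.ofLinearMap
    { toFun := rightMul k A Q M P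
      map_add' a' b' := hom_ext fun q m p => by simp [add_smul]
      map_smul' c a' := hom_ext fun q m p => by simp }
    (hom_ext fun q m p => by simp) (fun a' b' => hom_ext fun q m p => by simp [mul_smul])

noncomputable instance (priority := low) : Module A'ᵐᵒᵖ (TripleTensor k A Q M P) :=
  Module.compHom _ (rightAction k A Q M P).toRingHom

instance : IsScalarTower k A'ᵐᵒᵖ (TripleTensor k A Q M P) :=
  ⟨fun c a' n => LinearMap.congr_fun (map_smul (rightAction k A Q M P) c a') n⟩

lemma op_smul_mk (a' : A') (q : Q) (m : M) (p : P) :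
    op a' • mk k A Q M P q m p = mk k A Q M P q m (op a' • p) :=
  rightMul_mk (op a') q m p

end Right

variable [Module A' Q] [IsScalarTower k A' Q] [SMulCommClass A' Aᵐᵒᵖ Q]
  [Module A'ᵐᵒᵖ P] [IsScalarTower k A'ᵐᵒᵖ P] [SMulCommClass A A'ᵐᵒᵖ P]

instance : SMulCommClass A' A'ᵐᵒᵖ (TripleTensor k A Q M P) :=
  ⟨fun a' b' n => LinearMap.congr_fun
    (f := leftMul k A Q M P a' ∘ₗ rightMul k A Q M P b')
    (g := rightMul k A Q M P b' ∘ₗ leftMul k A Q M P a') (hom_ext fun q m p => by simp) n⟩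

lemma smul_eq_op_smul {a : A} {a' : A'} (hM : ∀ m : M, a • m = op a • m)
    (hP : ∀ p : P, a • p = op a' • p) (hQ : ∀ q : Q, op a • q = a' • q)
    (n : TripleTensor k A Q M P) : a' • n = op a' • n :=
  LinearMap.congr_fun (f := leftMul k A Q M P a') (g := rightMul k A Q M P (op a'))
    (hom_ext fun q m p => by
      rw [leftMul_mk, rightMul_mk, ← hQ, ← hP, mk_op_smul, mk_smul, hM]) n

end Bimodule

end TripleTensor

namespace MoritaContext

variable {k A A' Q M P : Type*} [CommRing k] [Ring A] [Algebra k A] [Ring A'] [Algebra k A']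
  [AddCommGroup P] [Module k P] [Module A P] [Module A'ᵐᵒᵖ P]
  [AddCommGroup Q] [Module k Q] [Module A' Q] [Module Aᵐᵒᵖ Q]
  [AddCommGroup M] [Module k M] [Module A M] [Module Aᵐᵒᵖ M]
  [IsScalarTower k A M] [IsScalarTower k Aᵐᵒᵖ M]

/-- The multilinear map `(p ⊗ q) m (p' ⊗ q') ↦ f(p ⊗ q) m f(p' ⊗ q')`. -/
noncomputable def sandwich (c : MoritaContext k A A' P Q) :
    Q →ₗ[k] M →ₗ[k] P →ₗ[k] P →ₗ[k] Q →ₗ[k] M :=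
  LinearMap.mk₂ k
    (fun q m =>
      ((LinearMap.llcomp k Q M M ∘ₗ (Algebra.lsmul k k M).toLinearMap ∘ₗ c.f.flip q).compl₂
        (c.f.compr₂ ((Algebra.lsmul k k M).toLinearMap.flip m ∘ₗ
          (opLinearEquiv k).toLinearMap))).flip)
    (fun q q' m => by ext; simp)
    (fun r q m => by ext; simp)
    (fun q m m' => by ext; simp)
    (fun r q m => by ext; simp)

@[simp]
lemma sandwich_apply (c : MoritaContext k A A' P Q) (q : Q) (m : M) (p' p : P) (q' : Q) :
    c.sandwich q m p' p q' = c.f p q • op (c.f p' q') • m := by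
  simp [sandwich]

variable [SMulCommClass A Aᵐᵒᵖ M]

/-- The map `P ⊗ (Q ⊗[A] M ⊗[A] P) ⊗ Q → M` contracting both outer pairs with `f`. -/
noncomputable def pull (c : MoritaContext k A A' P Q) :
    P →ₗ[k] TripleTensor k A Q M P →ₗ[k] Q →ₗ[k] M :=
  (TripleTensor.lift c.sandwich
    (fun a q m p' => by ext p q'; simp [c.f_op_smul, mul_smul, smul_comm a])
    (fun a q m p' => by ext p q'; simp [c.f_smul, mul_smul])).flip

@[simp]
lemma pull_mk (c : MoritaContext k A A' P Q) (p : P) (q : Q) (m : M) (p' : P) (q' : Q) :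
    c.pull p (TripleTensor.mk k A Q M P q m p') q' = c.f p q • op (c.f p' q') • m := by
  simp [pull]

variable [SMulCommClass A A'ᵐᵒᵖ P] [IsScalarTower k A'ᵐᵒᵖ P] [SMulCommClass A' Aᵐᵒᵖ Q]
  [IsScalarTower k A' Q]

/-- The `A'`-bimodule `Q ⊗[A] M ⊗[A] P` corresponds to `M`. -/
noncomputable def tripleTensorCoefficients (c : MoritaContext k A A' P Q) :
    c.Coefficients M (TripleTensor k A Q M P) where
  push := TripleTensor.mk k A Q M P
  pull := c.pull
  smul_push := TripleTensor.smul_mk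
  op_smul_push := TripleTensor.op_smul_mk
  push_op_smul := TripleTensor.mk_op_smul
  push_smul := TripleTensor.mk_smul
  smul_pull a p n q := LinearMap.congr_fun
    (f := Algebra.lsmul k k M a ∘ₗ (c.pull p).flip q) (g := (c.pull (a • p)).flip q)
    (TripleTensor.hom_ext fun q' m p' => by simp [c.f_smul, mul_smul]) n
  op_smul_pull a p n q := LinearMap.congr_fun
    (f := Algebra.lsmul k k M (op a) ∘ₗ (c.pull p).flip q) (g := (c.pull p).flip (op a • q))
    (TripleTensor.hom_ext fun q' m p' => by
      simp [c.f_op_smul, mul_smul, ← smul_comm _ (op a : Aᵐᵒᵖ)]) n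
  pull_op_smul a p n q := LinearMap.congr_fun
    (f := (c.pull (op a • p)).flip q) (g := (c.pull p).flip q ∘ₗ Algebra.lsmul k k _ a)
    (TripleTensor.hom_ext fun q' m p' => by simp [c.f_balanced, TripleTensor.smul_mk]) n
  pull_smul a p n q := LinearMap.congr_fun
    (f := (c.pull p).flip (a • q)) (g := (c.pull p).flip q ∘ₗ Algebra.lsmul k k _ (op a))
    (TripleTensor.hom_ext fun q' m p' => by simp [c.f_balanced, TripleTensor.op_smul_mk]) n
  pull_push := c.pull_mk
  push_pull q p n q' p' := LinearMap.congr_fun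
    (f := (TripleTensor.mk k A Q M P q).flip p' ∘ₗ (c.pull p).flip q')
    (g := Algebra.lsmul k k _ (c.g q p) ∘ₗ Algebra.lsmul k k _ (op (c.g q' p')))
    (TripleTensor.hom_ext fun q₁ m p₁ => by
      simp [TripleTensor.smul_mk, TripleTensor.op_smul_mk, ← TripleTensor.mk_op_smul,
        ← TripleTensor.mk_smul, c.op_f_smul, c.op_g_smul]) n

end MoritaContext

lemma surjective_lift_curry_comp_mkQ {R X Y Z : Type*} [CommRing R] [AddCommGroup X] [Module R X]
    [AddCommGroup Y] [Module R Y] [AddCommGroup Z] [Module R Z] {S : Submodule R (X ⊗[R] Y)}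
    {f : ((X ⊗[R] Y) ⧸ S) →ₗ[R] Z} (hf : Function.Surjective f) :
    Function.Surjective (TensorProduct.lift (TensorProduct.curry (f ∘ₗ S.mkQ))) := by
  have h : TensorProduct.lift (TensorProduct.curry (f ∘ₗ S.mkQ)) = f ∘ₗ S.mkQ :=
    TensorProduct.ext' fun _ _ => rfl
  rw [h]
  exact hf.comp S.mkQ_surjective

namespace MoritaContext

variable {k A A' P Q : Type*} [CommRing k] [Ring A] [Algebra k A] [Ring A'] [Algebra k A']
  [AddCommGroup P] [Module k P] [Module A P] [Module A'ᵐᵒᵖ P]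
  [AddCommGroup Q] [Module k Q] [Module A' Q] [Module Aᵐᵒᵖ Q]

/-- The Morita context of pairings given on the balanced tensor products `P ⊗[A'] Q` and
`Q ⊗[A] P`. -/
noncomputable def ofBalanced (f : ((P ⊗[k] Q) ⧸ moritaRel k A' P Q) →ₗ[k] A)
    (f_smul : ∀ (a : A) (p : P) (q : Q),
      f (Submodule.Quotient.mk ((a • p) ⊗ₜ[k] q)) = a * f (Submodule.Quotient.mk (p ⊗ₜ[k] q)))
    (f_op_smul : ∀ (p : P) (q : Q) (a : A),
      f (Submodule.Quotient.mk (p ⊗ₜ[k] (op a • q))) = f (Submodule.Quotient.mk (p ⊗ₜ[k] q)) * a)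
    (g : ((Q ⊗[k] P) ⧸ moritaRel k A Q P) →ₗ[k] A')
    (g_smul : ∀ (a' : A') (q : Q) (p : P),
      g (Submodule.Quotient.mk ((a' • q) ⊗ₜ[k] p)) = a' * g (Submodule.Quotient.mk (q ⊗ₜ[k] p)))
    (g_op_smul : ∀ (q : Q) (p : P) (a' : A'),
      g (Submodule.Quotient.mk (q ⊗ₜ[k] (op a' • p))) = g (Submodule.Quotient.mk (q ⊗ₜ[k] p)) * a')
    (op_f_smul : ∀ (p : P) (q q' : Q), op (f (Submodule.Quotient.mk (p ⊗ₜ[k] q'))) • q =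
      g (Submodule.Quotient.mk (q ⊗ₜ[k] p)) • q')
    (op_g_smul : ∀ (p p' : P) (q : Q), op (g (Submodule.Quotient.mk (q ⊗ₜ[k] p'))) • p =
      f (Submodule.Quotient.mk (p ⊗ₜ[k] q)) • p') : MoritaContext k A A' P Q where
  f := TensorProduct.curry (f ∘ₗ (moritaRel k A' P Q).mkQ)
  g := TensorProduct.curry (g ∘ₗ (moritaRel k A Q P).mkQ)
  f_smul := f_smul
  f_op_smul a p q := f_op_smul p q a
  f_balanced a' p q := congrArg f <|
    (Submodule.Quotient.eq _).2 (Submodule.subset_span ⟨a', p, q, rfl⟩)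
  g_smul := g_smul
  g_op_smul a' q p := g_op_smul q p a'
  g_balanced a q p := congrArg g <|
    (Submodule.Quotient.eq _).2 (Submodule.subset_span ⟨a, q, p, rfl⟩)
  op_f_smul := op_f_smul
  op_g_smul := op_g_smul

lemma exists_sum_f_eq_one (c : MoritaContext k A A' P Q)
    (hf : Function.Surjective (TensorProduct.lift c.f)) :
    ∃ S : Finset (P × Q), ∑ i ∈ S, c.f i.1 i.2 = 1 := by
  obtain ⟨z, hz⟩ := hf 1
  obtain ⟨S, rfl⟩ := TensorProduct.exists_finset z
  exact ⟨S, by simpa using hz⟩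

end MoritaContext

open SecondaryHochschild

theorem secondaryHochschild_H1_moritaInvariant_general
    {k A B A' B' M P Q : Type*} [CommRing k] [Ring A] [Algebra k A] [CommRing B] [Algebra k B]
    [Ring A'] [Algebra k A'] [CommRing B'] [Algebra k B']
    [AddCommGroup M] [Module k M] [Module A M] [Module Aᵐᵒᵖ M] [SMulCommClass A Aᵐᵒᵖ M]
    [IsScalarTower k A M] [IsScalarTower k Aᵐᵒᵖ M]
    [AddCommGroup P] [Module k P] [Module A P] [Module A'ᵐᵒᵖ P] [SMulCommClass A A'ᵐᵒᵖ P]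
    [IsScalarTower k A P] [IsScalarTower k A'ᵐᵒᵖ P]
    [AddCommGroup Q] [Module k Q] [Module A' Q] [Module Aᵐᵒᵖ Q] [SMulCommClass A' Aᵐᵒᵖ Q]
    [IsScalarTower k A' Q]
    (c : MoritaContext k A A' P Q) (hf : Function.Surjective (TensorProduct.lift c.f))
    (hg : Function.Surjective (TensorProduct.lift c.g))
    (ε : B →ₐ[k] A) (hcen : ∀ (b : B) (a : A), ε b * a = a * ε b)
    (ε' : B' →ₐ[k] A') (hcen' : ∀ (b : B') (a : A'), ε' b * a = a * ε' b)
    (hsymm : ∀ (b : B) (m : M), ε b • m = op (ε b) • m)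
    (η : B → B') (hη : Function.Surjective η)
    (hP : ∀ (α : B) (p : P), ε α • p = op (ε' (η α)) • p)
    (hQ : ∀ (α : B) (q : Q), op (ε α) • q = ε' (η α) • q) :
    Nonempty (H₁ ε M ≃ₗ[k] H₁ ε' (TripleTensor k A Q M P)) := by
  obtain ⟨S, hS⟩ := c.exists_sum_f_eq_one hf
  obtain ⟨T, hT⟩ := c.symm.exists_sum_f_eq_one hg
  obtain ⟨θ, hθ⟩ := hη.hasRightInverse
  have hsymm' (b : B') (n : TripleTensor k A Q M P) : ε' b • n = op (ε' b) • n := by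
    obtain ⟨α, rfl⟩ := hη b
    exact TripleTensor.smul_eq_op_smul (hsymm α) (hP α) (hQ α) n
  exact ⟨c.tripleTensorCoefficients.h₁Equiv hcen hcen' hS hT hP hQ
    (fun α p => by rw [hP, hθ]) (fun α q => by rw [hQ, hθ])
    (d₁_comp_d₂ ε hcen hsymm) (d₁_comp_d₂ ε' hcen' hsymm')⟩

theorem secondaryHochschild_H1_moritaInvariant
    (k : Type*) [CommRing k]
    -- the triple (A,B,ε)
    (A : Type*) [Ring A] [Algebra k A]
    (B : Type*) [CommRing B] [Algebra k B]
    (ε : B →ₐ[k] A) (hcen : ∀ (b : B) (a : A), ε b * a = a * ε b)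
    -- the triple (A',B',ε')
    (A' : Type*) [Ring A'] [Algebra k A']
    (B' : Type*) [CommRing B'] [Algebra k B']
    (ε' : B' →ₐ[k] A') (hcen' : ∀ (b : B') (a : A'), ε' b * a = a * ε' b)
    -- M is an A-bimodule, k acting centrally, which is B-symmetric
    (M : Type*) [AddCommGroup M] [Module k M]
    [Module A M] [Module Aᵐᵒᵖ M] [SMulCommClass A Aᵐᵒᵖ M]
    [IsScalarTower k A M] [IsScalarTower k Aᵐᵒᵖ M]
    (hsymm : ∀ (b : B) (m : M), ε b • m = op (ε b) • m)
    -- P is an (A,A')-bimodule, k acting centrally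
    (P : Type*) [AddCommGroup P] [Module k P]
    [Module A P] [Module A'ᵐᵒᵖ P] [SMulCommClass A A'ᵐᵒᵖ P]
    [IsScalarTower k A P] [IsScalarTower k A'ᵐᵒᵖ P]
    -- Q is an (A',A)-bimodule, k acting centrally
    (Q : Type*) [AddCommGroup Q] [Module k Q]
    [Module A' Q] [Module Aᵐᵒᵖ Q] [SMulCommClass A' Aᵐᵒᵖ Q]
    [IsScalarTower k A' Q] [IsScalarTower k Aᵐᵒᵖ Q]
    -- f : P ⊗[A'] Q ≅ A, an isomorphism of A-bimodules
    (f : ((P ⊗[k] Q) ⧸ moritaRel k A' P Q) ≃ₗ[k] A)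
    (hfl : ∀ (a : A) (p : P) (q : Q),
      f (Submodule.Quotient.mk ((a • p) ⊗ₜ[k] q))
        = a * f (Submodule.Quotient.mk (p ⊗ₜ[k] q)))
    (hfr : ∀ (p : P) (q : Q) (a : A),
      f (Submodule.Quotient.mk (p ⊗ₜ[k] (op a • q)))
        = f (Submodule.Quotient.mk (p ⊗ₜ[k] q)) * a)
    -- g : Q ⊗[A] P ≅ A', an isomorphism of A'-bimodules
    (g : ((Q ⊗[k] P) ⧸ moritaRel k A Q P) ≃ₗ[k] A')
    (hgl : ∀ (a' : A') (q : Q) (p : P),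
      g (Submodule.Quotient.mk ((a' • q) ⊗ₜ[k] p))
        = a' * g (Submodule.Quotient.mk (q ⊗ₜ[k] p)))
    (hgr : ∀ (q : Q) (p : P) (a' : A'),
      g (Submodule.Quotient.mk (q ⊗ₜ[k] (op a' • p)))
        = g (Submodule.Quotient.mk (q ⊗ₜ[k] p)) * a')
    -- compatibility: q·f(p⊗q') = g(q⊗p)·q' and p·g(q⊗p') = f(p⊗q)·p'
    (hcompat₁ : ∀ (p : P) (q q' : Q),
      op (f (Submodule.Quotient.mk (p ⊗ₜ[k] q'))) • q
        = g (Submodule.Quotient.mk (q ⊗ₜ[k] p)) • q')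
    (hcompat₂ : ∀ (p p' : P) (q : Q),
      op (g (Submodule.Quotient.mk (q ⊗ₜ[k] p'))) • p
        = f (Submodule.Quotient.mk (p ⊗ₜ[k] q)) • p')
    -- η : B ≅ B' as k-algebras
    (η : B ≃ₐ[k] B')
    -- P and Q are symmetric with respect to B and B' under η
    (hPsym : ∀ (α : B) (p : P), ε α • p = op (ε' (η α)) • p)
    (hQsym : ∀ (α : B) (q : Q), op (ε α) • q = ε' (η α) • q)
    -- the secondary Hochschild differentials ∂₁, ∂₂ of (A,B,ε) with coefficients in M
    (p1 : M ⊗[k] A →ₗ[k] M)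
    (hp1 : ∀ (m : M) (a : A), p1 (m ⊗ₜ[k] a) = op a • m - a • m)
    (p2 : M ⊗[k] A ⊗[k] A ⊗[k] B →ₗ[k] M ⊗[k] A)
    (hp2 : ∀ (m : M) (a b : A) (α : B),
      p2 (m ⊗ₜ[k] a ⊗ₜ[k] b ⊗ₜ[k] α) =
        (op (a * ε α) • m) ⊗ₜ[k] b - m ⊗ₜ[k] (a * ε α * b) + ((b * ε α) • m) ⊗ₜ[k] a)
    -- the secondary Hochschild differentials ∂₁', ∂₂' of (A',B',ε') with
    -- coefficients in N = Q ⊗[A] M ⊗[A] P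
    (q1 : ((Q ⊗[k] M ⊗[k] P) ⧸ tripleRel k A Q M P) ⊗[k] A'
        →ₗ[k] ((Q ⊗[k] M ⊗[k] P) ⧸ tripleRel k A Q M P))
    (hq1 : ∀ (q : Q) (m : M) (p : P) (a' : A'),
      q1 ((Submodule.Quotient.mk (q ⊗ₜ[k] m ⊗ₜ[k] p)
            : (Q ⊗[k] M ⊗[k] P) ⧸ tripleRel k A Q M P) ⊗ₜ[k] a')
        = Submodule.Quotient.mk (q ⊗ₜ[k] m ⊗ₜ[k] (op a' • p))
          - Submodule.Quotient.mk ((a' • q) ⊗ₜ[k] m ⊗ₜ[k] p))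
    (q2 : ((Q ⊗[k] M ⊗[k] P) ⧸ tripleRel k A Q M P) ⊗[k] A' ⊗[k] A' ⊗[k] B'
        →ₗ[k] ((Q ⊗[k] M ⊗[k] P) ⧸ tripleRel k A Q M P) ⊗[k] A')
    (hq2 : ∀ (q : Q) (m : M) (p : P) (a b : A') (α' : B'),
      q2 ((Submodule.Quotient.mk (q ⊗ₜ[k] m ⊗ₜ[k] p)
            : (Q ⊗[k] M ⊗[k] P) ⧸ tripleRel k A Q M P) ⊗ₜ[k] a ⊗ₜ[k] b ⊗ₜ[k] α')
        = (Submodule.Quotient.mk (q ⊗ₜ[k] m ⊗ₜ[k] (op (a * ε' α') • p))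
            : (Q ⊗[k] M ⊗[k] P) ⧸ tripleRel k A Q M P) ⊗ₜ[k] b
          - (Submodule.Quotient.mk (q ⊗ₜ[k] m ⊗ₜ[k] p)
            : (Q ⊗[k] M ⊗[k] P) ⧸ tripleRel k A Q M P) ⊗ₜ[k] (a * ε' α' * b)
          + (Submodule.Quotient.mk (((b * ε' α') • q) ⊗ₜ[k] m ⊗ₜ[k] p)
            : (Q ⊗[k] M ⊗[k] P) ⧸ tripleRel k A Q M P) ⊗ₜ[k] a) :
    -- H₁((A,B,ε);M) ≅ H₁((A',B',ε');Q⊗_A M⊗_A P) as k-modules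
    Nonempty
      ((↥(LinearMap.ker p1) ⧸ (LinearMap.range p2).comap (LinearMap.ker p1).subtype)
        ≃ₗ[k]
       (↥(LinearMap.ker q1) ⧸ (LinearMap.range q2).comap (LinearMap.ker q1).subtype)) := by
  obtain rfl : p1 = d₁ k A M := TensorProduct.ext' fun m a => by rw [hp1, d₁_tmul]
  obtain rfl : p2 = d₂ ε M := TensorProduct.ext_fourfold fun m a b α => by rw [hp2, d₂_tmul]
  obtain rfl : q1 = d₁ k A' (TripleTensor k A Q M P) :=
    TensorProduct.ext <| TripleTensor.hom_ext fun q m p => LinearMap.ext fun a' =>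
      (hq1 q m p a').trans (d₁_tmul _ (TripleTensor.mk k A Q M P q m p) a').symm
  obtain rfl : q2 = d₂ ε' (TripleTensor k A Q M P) :=
    TensorProduct.ext <| TensorProduct.ext <| TensorProduct.ext <| TripleTensor.hom_ext
      fun q m p => LinearMap.ext fun a => LinearMap.ext₂ fun b α =>
        (hq2 q m p a b α).trans (d₂_tmul ε' _ (TripleTensor.mk k A Q M P q m p) a b α).symm
  let c : MoritaContext k A A' P Q :=
    .ofBalanced f.toLinearMap hfl hfr g.toLinearMap hgl hgr hcompat₁ hcompat₂
  have hf : Function.Surjective (TensorProduct.lift c.f) :=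
    surjective_lift_curry_comp_mkQ (f := f.toLinearMap) f.surjective
  have hg : Function.Surjective (TensorProduct.lift c.g) :=
    surjective_lift_curry_comp_mkQ (f := g.toLinearMap) g.surjective
  exact secondaryHochschild_H1_moritaInvariant_general c hf hg ε hcen ε' hcen' hsymm η η.surjective
    hPsym hQsym
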